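/- Let σ : ℤ^k → Σ_n be a group homomorphism acting transitively on {1,…,n}, and let f₁,…,fₙ : ℝ^k → ℝ^k be continuous maps satisfying f_i(t+z) = f_{σ_z^{-1}(i)}(t) for all i, all z ∈ ℤ^k and all t ∈ ℝ^k, and such that f_i(t) − f_j(t) ∉ ℤ^k whenever i ≠ j. Let ψ = (φ₁,…,φₙ; σ) : ℤ^k → (ℤ^k)^n ⋊ Σ_n be any morphism with the same σ. Then there exist a matrix A ∈ ℝ^{k×k}, vectors a₁,…,aₙ ∈ ℝ^k and ε > 0 such that the maps g_i(t) := A t + a_i + ε f_i(t) satisfy g_i(t+z) = g_{σ_z^{-1}(i)}(t) + φ_i(z) for all i, z ∈ ℤ^k, t ∈ ℝ^k, and g_i(t) − g_j(t) ∉ ℤ^k for all i ≠ j and all t ∈ ℝ^k. -/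

import Mathlib

/-!
The required equivariance says that `A z = φ_i(z) - a_i + a_{σ_z⁻¹ i}`, i.e. that the cocycle `φ` is,
over `ℝ`, a homomorphism plus a coboundary. Averaging produces the homomorphism:
`F z = (1/n) ∑_i φ_i(z)` is additive because `σ` only permutes the summands, and every additive map
`ℤ^k → ℝ^k` is given by a matrix (`exists_matrix_of_addMonoidHom`). If `d` stabilises one index `i₀`,
commutativity of `ℤ^k` together with transitivity forces `φ_j(d) = φ_{i₀}(d)` for all `j`, so the real
cocycle `h = φ - F` vanishes on the stabiliser of `i₀`; it is therefore a coboundary, with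
`a_i = h_i(z)` for any `z` moving `i₀` to `i` (`exists_matrix_coboundary`).

For distinctness, the `f_i` are jointly bounded, since each value of `f_i` is a value of some `f_j` on
the unit cube (`exists_bound`). As `ℤ^k` is discrete and closed (`eventually_lattice`), for small
`ε > 0` the relation `a_i - a_j + ε (f_i t - f_j t) = w ∈ ℤ^k` is possible only if `a_i - a_j = w`;
but then `f_i t = f_j t`, contrary to assumption.
-/

/-- The inclusion of the standard lattice `ℤ^k` into `ℝ^k`. -/
def coeVec {k : ℕ} (z : Fin k → ℤ) : Fin k → ℝ := fun j => (z j : ℝ)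

lemma coeVec_add {k : ℕ} (x y : Fin k → ℤ) : coeVec (x + y) = coeVec x + coeVec y := by
  funext j; simp [coeVec]

lemma exists_matrix_of_addMonoidHom {k : ℕ} (F : (Fin k → ℤ) →+ (Fin k → ℝ)) :
    ∃ A : Matrix (Fin k) (Fin k) ℝ, ∀ z, A.mulVec (coeVec z) = F z := by
  refine ⟨Matrix.of fun j l => F (Pi.single l 1) j, fun z => ?_⟩
  have hz : z = ∑ l, z l • (Pi.single l 1 : Fin k → ℤ) := by
    funext j
    simp [Finset.sum_apply, Pi.single_apply]
  conv_rhs => rw [hz]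
  rw [map_sum]
  simp only [map_zsmul]
  funext j
  simp only [Matrix.mulVec, dotProduct, Finset.sum_apply, coeVec, Matrix.of_apply,
    zsmul_eq_mul]
  exact Finset.sum_congr rfl fun l _ => mul_comm _ _

/-- Over `ℝ`, the cocycle `φ` is a linear map plus a coboundary. -/
lemma exists_matrix_coboundary {k n : ℕ} (hn : 1 ≤ n)
    (σ : (Fin k → ℤ) → Equiv.Perm (Fin n))
    (hσ : ∀ z₁ z₂ : Fin k → ℤ, σ (z₁ + z₂) = σ z₁ * σ z₂)
    (φ : Fin n → (Fin k → ℤ) → Fin k → ℤ)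
    (hφ : ∀ (i : Fin n) (z₁ z₂ : Fin k → ℤ),
      φ i (z₁ + z₂) = φ i z₁ + φ ((σ z₁)⁻¹ i) z₂)
    (htrans : ∀ i j : Fin n, ∃ z : Fin k → ℤ, σ z i = j) :
    ∃ (A : Matrix (Fin k) (Fin k) ℝ) (a : Fin n → Fin k → ℝ), ∀ i z,
      A.mulVec (coeVec z) + a i = a ((σ z)⁻¹ i) + coeVec (φ i z) := by
  have hn0 : (n : ℝ) ≠ 0 := by positivity
  let F : (Fin k → ℤ) →+ (Fin k → ℝ) := AddMonoidHom.mk'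
    (fun z => (n : ℝ)⁻¹ • ∑ i, coeVec (φ i z)) (by
      intro x y
      rw [← smul_add]
      congr 1
      simp only [hφ, coeVec_add, Finset.sum_add_distrib]
      congr 1
      exact Equiv.sum_comp (σ x)⁻¹ fun i => coeVec (φ i y))
  have hF : ∀ z, F z = (n : ℝ)⁻¹ • ∑ i, coeVec (φ i z) := fun z => rfl
  obtain ⟨A, hA⟩ := exists_matrix_of_addMonoidHom F
  let i₀ : Fin n := ⟨0, hn⟩
  have hstab : ∀ d, (σ d)⁻¹ i₀ = i₀ → coeVec (φ i₀ d) = F d := by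
    intro d hd
    have hj : ∀ j, φ j d = φ i₀ d := by
      intro j
      obtain ⟨w, hw⟩ := htrans j i₀
      have h1 := hφ i₀ w d
      have h2 := hφ i₀ d w
      have hw' : (σ w)⁻¹ i₀ = j := by rw [Equiv.Perm.inv_eq_iff_eq, hw]
      rw [add_comm, h2, hd, hw', add_comm] at h1
      exact (add_left_cancel h1).symm
    rw [hF]
    simp only [hj, Finset.sum_const, Finset.card_univ, Fintype.card_fin]
    rw [← Nat.cast_smul_eq_nsmul ℝ, smul_smul, inv_mul_cancel₀ hn0, one_smul]
  choose c hc using fun i => htrans i₀ i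
  have hc' : ∀ i, (σ (c i))⁻¹ i = i₀ := fun i => by
    rw [Equiv.Perm.inv_eq_iff_eq, hc]
  -- `φ_i - F` takes the same value at any two `z` that move `i₀` to `i`.
  have key : ∀ i y, (σ y)⁻¹ i = i₀ →
      coeVec (φ i y) - F y = coeVec (φ i (c i)) - F (c i) := by
    intro i y hy
    have hyd : y = c i + (y - c i) := by abel
    have hd : (σ (y - c i))⁻¹ i₀ = i₀ := by
      have h := hy
      rw [hyd, hσ, mul_inv_rev, Equiv.Perm.mul_apply, hc'] at h
      exact h
    have h1 := hφ i (c i) (y - c i)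
    rw [hc', ← hyd] at h1
    rw [h1, coeVec_add, hstab _ hd, map_sub]
    abel
  refine ⟨A, fun i => coeVec (φ i (c i)) - F (c i), fun i z => ?_⟩
  have h := key i (z + c ((σ z)⁻¹ i)) (by
    rw [hσ, mul_inv_rev, Equiv.Perm.mul_apply, hc'])
  rw [hφ, coeVec_add, map_add] at h
  simp only [hA, ← h]
  abel

lemma exists_bound {k n : ℕ} (σ : (Fin k → ℤ) → Equiv.Perm (Fin n))
    (f : Fin n → (Fin k → ℝ) → Fin k → ℝ)
    (hcont : ∀ i : Fin n, Continuous (f i))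
    (hf : ∀ (i : Fin n) (z : Fin k → ℤ) (t : Fin k → ℝ),
      f i (t + coeVec z) = f ((σ z)⁻¹ i) t) :
    ∃ M : ℝ, ∀ i t, ‖f i t‖ ≤ M := by
  have hK : IsCompact (Set.Icc (0 : Fin k → ℝ) 1) := isCompact_Icc
  choose C hC using fun i => hK.exists_bound_of_continuousOn (hcont i).continuousOn
  refine ⟨∑ i, |C i|, fun i t => ?_⟩
  have ht : t = (fun j => Int.fract (t j)) + coeVec (fun j => ⌊t j⌋) := by
    funext j; simp [coeVec]
  rw [ht, hf]
  refine (hC _ _ ⟨fun j => Int.fract_nonneg _, fun j => (Int.fract_lt_one _).le⟩).trans ?_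
  exact (le_abs_self _).trans
    (Finset.single_le_sum (f := fun i => |C i|) (fun _ _ => abs_nonneg _) (Finset.mem_univ _))

open Filter Topology in
lemma eventually_lattice {k : ℕ} (v : Fin k → ℝ) :
    ∀ᶠ δ : ℝ in 𝓝 0, ∀ w : Fin k → ℤ, ‖v - coeVec w‖ ≤ δ → v = coeVec w := by
  have h1 : ∀ x : ℝ, ∀ᶠ δ : ℝ in 𝓝 0, ∀ m : ℤ, |x - m| ≤ δ → x = m := by
    intro x
    by_cases hx : x = round x
    · filter_upwards [gt_mem_nhds one_pos] with δ hδ m hm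
      rw [hx] at hm ⊢
      have h : |round x - m| < 1 := by exact_mod_cast hm.trans_lt hδ
      rw [Int.abs_lt_one_iff] at h
      exact_mod_cast sub_eq_zero.1 h
    · filter_upwards [gt_mem_nhds (abs_pos.2 (sub_ne_zero.2 hx))] with δ hδ m hm
      exact absurd (hm.trans_lt hδ) (not_lt.2 (round_le x m))
  filter_upwards [eventually_all.2 fun j => h1 (v j)] with δ hδ w hw
  funext j
  exact hδ j (w j) ((norm_le_pi_norm (v - coeVec w) j).trans hw)

theorem stmt18 {k n : ℕ} (hk : 1 ≤ k) (hn : 1 ≤ n)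
    (σ : (Fin k → ℤ) → Equiv.Perm (Fin n))
    (hσ : ∀ z₁ z₂ : Fin k → ℤ, σ (z₁ + z₂) = σ z₁ * σ z₂)
    (φ : Fin n → (Fin k → ℤ) → Fin k → ℤ)
    (hφ : ∀ (i : Fin n) (z₁ z₂ : Fin k → ℤ),
      φ i (z₁ + z₂) = φ i z₁ + φ ((σ z₁)⁻¹ i) z₂)
    (f : Fin n → (Fin k → ℝ) → Fin k → ℝ)
    (hcont : ∀ i : Fin n, Continuous (f i))
    (hf : ∀ (i : Fin n) (z : Fin k → ℤ) (t : Fin k → ℝ),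
      f i (t + coeVec z) = f ((σ z)⁻¹ i) t)
    (htrans : ∀ i j : Fin n, ∃ z : Fin k → ℤ, σ z i = j)
    (hdist : ∀ i j : Fin n, i ≠ j → ∀ t : Fin k → ℝ,
      ¬ ∃ w : Fin k → ℤ, f i t - f j t = coeVec w) :
    ∃ (A : Matrix (Fin k) (Fin k) ℝ) (a : Fin n → Fin k → ℝ) (ε : ℝ), 0 < ε ∧
      (∀ (i : Fin n) (z : Fin k → ℤ) (t : Fin k → ℝ),
        A.mulVec (t + coeVec z) + a i + ε • f i (t + coeVec z) =
          (A.mulVec t + a ((σ z)⁻¹ i) + ε • f ((σ z)⁻¹ i) t) + coeVec (φ i z)) ∧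
      (∀ i j : Fin n, i ≠ j → ∀ t : Fin k → ℝ,
        ¬ ∃ w : Fin k → ℤ,
          (A.mulVec t + a i + ε • f i t) - (A.mulVec t + a j + ε • f j t) = coeVec w) := by
  obtain ⟨A, a, hA⟩ := exists_matrix_coboundary hn σ hσ φ hφ htrans
  obtain ⟨M, hM⟩ := exists_bound σ f hcont hf
  have hev : ∀ᶠ ε : ℝ in nhdsWithin 0 (Set.Ioi 0), ∀ i j, ∀ w : Fin k → ℤ,
      ‖a i - a j - coeVec w‖ ≤ ε * (M + M) → a i - a j = coeVec w := by
    have hlim : Filter.Tendsto (fun ε : ℝ => ε * (M + M)) (nhdsWithin 0 (Set.Ioi 0)) (nhds 0) := by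
      have h : Continuous fun ε : ℝ => ε * (M + M) := by fun_prop
      simpa using (h.tendsto 0).mono_left nhdsWithin_le_nhds
    exact Filter.eventually_all.2 fun i => Filter.eventually_all.2 fun j =>
      hlim.eventually (eventually_lattice (a i - a j))
  obtain ⟨ε, hε, hpos⟩ := (hev.and self_mem_nhdsWithin).exists
  have hpos : 0 < ε := hpos
  refine ⟨A, a, ε, hpos, fun i z t => ?_, ?_⟩
  · rw [hf, Matrix.mulVec_add, add_assoc (A.mulVec t), hA]
    abel
  · rintro i j hij t ⟨w, hw⟩
    have hw' : a i - a j - coeVec w = -(ε • (f i t - f j t)) := by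
      rw [← hw, smul_sub]; abel
    have haw : a i - a j = coeVec w := by
      apply hε
      rw [hw', norm_neg, norm_smul, Real.norm_of_nonneg hpos.le]
      gcongr
      exact (norm_sub_le _ _).trans (add_le_add (hM i t) (hM j t))
    rw [haw, sub_self, eq_comm, neg_eq_zero, smul_eq_zero_iff_right hpos.ne'] at hw'
    exact hdist i j hij t ⟨0, by rw [hw']; funext l; simp [coeVec]⟩
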